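/- arXiv:1004.4423 — 2 statements merged into one kernel-verified Lean document; each statement's English description precedes it below -/
import Mathlib

section
/- Let X be a quandle and let f ∈ C^k, g ∈ C^m be rack cochains on C_•(X) (with coefficients in an abelian group) that vanish on all degenerate tuples (those with xᵢ = x_{i+1} for some i). Then the cup product f∪g, defined by the shuffle-sum formula over subsets, also vanishes on all degenerate tuples; i.e., quandle cochains are closed under the cup product. -/
/-- Zero-face `δ⁰ᵢ` of the □-set `B(X)` (tuples as lists, 0-based index). -/
def face0 {X : Type*} (l : List X) (i : ℕ) : List X := l.eraseIdx i

/-- One-face `δ¹ᵢ` of the □-set `B(X)`: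
`(x₁,…,xₙ) ↦ (x₁*xᵢ,…,x_{i-1}*xᵢ, x_{i+1},…,xₙ)`. -/
def face1 {X : Type*} (act : X → X → X) (l : List X) (i : ℕ) : List X :=
  match l[i]? with
  | some b => (l.take i).map (fun a => act a b) ++ l.drop (i + 1)
  | none => l

/-- Iterated face `δ^ε_A`, applied from the largest index down. -/
def multiFace {X : Type*} (f : List X → ℕ → List X) (S : Finset ℕ) (l : List X) :
    List X :=
  ((S.sort (· ≤ ·)).reverse).foldl f l

/-- The shuffle sign `ε(A)`. -/
def shuffleSign (S T : Finset ℕ) : ℤ :=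
  (-1) ^ (((S ×ˢ T).filter fun p => p.1 < p.2).card)

/-- The cup product `(f∪g)(x) = (-1)^{km} Σ_A ε(A) f(δ⁰_A x) g(δ¹_B x)`,
summing over subsets `A ⊆ [k+m]` of size `m` with complement `B`. -/
def cup {X A : Type*} [CommRing A] (act : X → X → X) (k m : ℕ)
    (f g : List X → A) : List X → A :=
  fun l => (-1 : A) ^ (k * m) *
    ∑ S ∈ Finset.powersetCard m (Finset.range (k + m)),
      (shuffleSign S (Finset.range (k + m) \ S) : A) *
        (f (multiFace face0 S l) *
          g (multiFace (face1 act) (Finset.range (k + m) \ S) l))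

/-- A tuple is degenerate if two consecutive entries coincide. -/
def Degenerate {X : Type*} (l : List X) : Prop :=
  ∃ (l₁ : List X) (a : X) (l₂ : List X), l = l₁ ++ a :: a :: l₂

/-!
Let `xᵢ = xᵢ₊₁` in `x`. If `A` contains neither of `i, i + 1`, then `δ⁰_A x` still has a repeated
pair; if it contains both, then `δ¹_B x` does. The remaining subsets are paired off by exchanging
`i` and `i + 1` in `A`: since `δ⁰ᵢ x = δ⁰ᵢ₊₁ x` and, by idempotency, `δ¹ᵢ x = δ¹ᵢ₊₁ x`, this changes
neither `δ⁰_A x` nor `δ¹_B x`, while it alters the set of pairs counted by the shuffle sign in the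
single pair `(i, i + 1)`.
-/

/-- The entries of `l` at the (0-based) positions `i` and `i + 1` exist and coincide. -/
def RepeatsAt {X : Type*} (l : List X) (i : ℕ) : Prop :=
  ∃ a, l[i]? = some a ∧ l[i + 1]? = some a

theorem RepeatsAt.lt_length {X : Type*} {l : List X} {i : ℕ} (h : RepeatsAt l i) :
    i + 1 < l.length := by
  obtain ⟨a, -, ha⟩ := h
  exact (List.getElem?_eq_some_iff.1 ha).1

theorem degenerate_iff_exists_repeatsAt {X : Type*} {l : List X} :
    Degenerate l ↔ ∃ i, RepeatsAt l i := by
  constructor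
  · rintro ⟨p, a, q, rfl⟩
    exact ⟨p.length, a, by simp, by simp⟩
  · rintro ⟨i, a, ha, ha'⟩
    obtain ⟨hi, rfl⟩ := List.getElem?_eq_some_iff.1 ha
    obtain ⟨hi', heq⟩ := List.getElem?_eq_some_iff.1 ha'
    refine ⟨l.take i, l[i], l.drop (i + 2), ?_⟩
    nth_rw 2 [← heq]
    rw [← List.drop_eq_getElem_cons hi', ← List.drop_eq_getElem_cons hi, List.take_append_drop]

/-- A family of face maps, `d l j` deleting the entry of `l` at position `j`, such that deleting an
entry outside a repeated pair keeps the pair, shifted down if the deleted entry precedes it. -/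
structure PreservesRepeats {X : Type*} (d : List X → ℕ → List X) : Prop where
  repeatsAt_of_lt {l : List X} {i j : ℕ} : RepeatsAt l i → i + 1 < j → RepeatsAt (d l j) i
  repeatsAt_of_le {l : List X} {i j : ℕ} : RepeatsAt l (i + 1) → j ≤ i → RepeatsAt (d l j) i

/-- A family of face maps that preserves repeated pairs and for which deleting either member of a
repeated pair has the same effect. -/
structure RespectsRepeats {X : Type*} (d : List X → ℕ → List X) : Prop
    extends PreservesRepeats d where
  apply_succ_eq {l : List X} {i : ℕ} : RepeatsAt l i → d l (i + 1) = d l i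

theorem preservesRepeats_face0 {X : Type*} : PreservesRepeats (face0 (X := X)) where
  repeatsAt_of_lt := by
    rintro l i j ⟨a, ha, ha'⟩ hij
    exact ⟨a, by rwa [face0, List.getElem?_eraseIdx_of_lt (by lia)],
      by rwa [face0, List.getElem?_eraseIdx_of_lt hij]⟩
  repeatsAt_of_le := by
    rintro l i j ⟨a, ha, ha'⟩ hji
    exact ⟨a, by rwa [face0, List.getElem?_eraseIdx_of_ge hji],
      by rwa [face0, List.getElem?_eraseIdx_of_ge (by lia)]⟩

theorem respectsRepeats_face0 {X : Type*} : RespectsRepeats (face0 (X := X)) where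
  toPreservesRepeats := preservesRepeats_face0
  apply_succ_eq := by
    rintro l i ⟨a, ha, ha'⟩
    refine List.ext_getElem? fun t => ?_
    simp only [face0, List.getElem?_eraseIdx]
    obtain hlt | rfl | hgt := lt_trichotomy t i
    · simp [hlt, hlt.trans (Nat.lt_succ_self i)]
    · simp [ha, ha']
    · simp [hgt.not_gt, show ¬t < i + 1 by lia]

section Face1

variable {X : Type*} (act : X → X → X) {l : List X} {i j : ℕ} {b : X}

theorem face1_of_length_le (h : l.length ≤ j) : face1 act l j = l := by
  simp [face1, List.getElem?_eq_none h]

theorem getElem?_face1_of_lt (hb : l[j]? = some b) (hij : i < j) :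
    (face1 act l j)[i]? = l[i]?.map (act · b) := by
  obtain ⟨hj, -⟩ := List.getElem?_eq_some_iff.1 hb
  simp only [face1, hb]
  rw [List.getElem?_append_left (by simp; lia), List.getElem?_map, List.getElem?_take_of_lt hij]

theorem getElem?_face1_of_le (hb : l[j]? = some b) (hji : j ≤ i) :
    (face1 act l j)[i]? = l[i + 1]? := by
  obtain ⟨hj, -⟩ := List.getElem?_eq_some_iff.1 hb
  have hlen : ((l.take j).map (act · b)).length = j := by simp [hj.le]
  simp only [face1, hb]
  rw [List.getElem?_append_right (by rwa [hlen]), hlen, List.getElem?_drop]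
  congr 1
  lia

theorem preservesRepeats_face1 : PreservesRepeats (face1 act) where
  repeatsAt_of_lt := by
    rintro l i j ⟨a, ha, ha'⟩ hij
    obtain hj | hj := le_or_gt l.length j
    · exact ⟨a, by rwa [face1_of_length_le act hj], by rwa [face1_of_length_le act hj]⟩
    · have hb := List.getElem?_eq_getElem hj
      exact ⟨act a l[j], by rw [getElem?_face1_of_lt act hb (by lia), ha, Option.map_some],
        by rw [getElem?_face1_of_lt act hb hij, ha', Option.map_some]⟩
  repeatsAt_of_le := by
    rintro l i j hrep hji
    have hb := List.getElem?_eq_getElem (show j < l.length by have := hrep.lt_length; lia)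
    obtain ⟨a, ha, ha'⟩ := hrep
    exact ⟨a, by rwa [getElem?_face1_of_le act hb hji],
      by rwa [getElem?_face1_of_le act hb (by lia)]⟩

theorem respectsRepeats_face1 (hidem : ∀ a, act a a = a) : RespectsRepeats (face1 act) where
  toPreservesRepeats := preservesRepeats_face1 act
  apply_succ_eq := by
    rintro l i ⟨a, ha, ha'⟩
    refine List.ext_getElem? fun t => ?_
    obtain hlt | rfl | hgt := lt_trichotomy t i
    · rw [getElem?_face1_of_lt act ha' (by lia), getElem?_face1_of_lt act ha hlt]
    · rw [getElem?_face1_of_lt act ha' (Nat.lt_succ_self t), getElem?_face1_of_le act ha le_rfl,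
        ha, ha', Option.map_some, hidem]
    · rw [getElem?_face1_of_le act ha' hgt, getElem?_face1_of_le act ha hgt.le]

end Face1

/-- The set obtained from `S` by exchanging the roles of `i` and `i + 1`. -/
def swapAdjacent (i : ℕ) (S : Finset ℕ) : Finset ℕ :=
  S.map (Equiv.swap i (i + 1)).toEmbedding

section SwapAdjacent

variable {i n x : ℕ} {S T : Finset ℕ}

theorem mem_swapAdjacent : x ∈ swapAdjacent i S ↔ Equiv.swap i (i + 1) x ∈ S := by
  rw [swapAdjacent, Finset.mem_map_equiv, Equiv.symm_swap]

theorem left_mem_swapAdjacent : i ∈ swapAdjacent i S ↔ i + 1 ∈ S := by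
  rw [mem_swapAdjacent, Equiv.swap_apply_left]

theorem right_mem_swapAdjacent : i + 1 ∈ swapAdjacent i S ↔ i ∈ S := by
  rw [mem_swapAdjacent, Equiv.swap_apply_right]

theorem swapAdjacent_swapAdjacent : swapAdjacent i (swapAdjacent i S) = S := by
  ext x
  simp only [mem_swapAdjacent, Equiv.swap_apply_self]

theorem card_swapAdjacent : (swapAdjacent i S).card = S.card :=
  Finset.card_map _

theorem swapAdjacent_sdiff : swapAdjacent i (S \ T) = swapAdjacent i S \ swapAdjacent i T := by
  ext x
  simp only [mem_swapAdjacent, Finset.mem_sdiff]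

theorem swapAdjacent_mono (h : S ⊆ T) : swapAdjacent i S ⊆ swapAdjacent i T :=
  Finset.map_subset_map.2 h

theorem swapAdjacent_eq_self_iff : swapAdjacent i S = S ↔ (i ∈ S ↔ i + 1 ∈ S) := by
  refine ⟨fun h => by rw [← right_mem_swapAdjacent, h], fun h => ?_⟩
  ext x
  rw [mem_swapAdjacent, Equiv.swap_apply_def]
  split_ifs with hx hx' <;> simp_all

theorem swapAdjacent_insert_left (hi : i ∉ S) (hi' : i + 1 ∉ S) :
    swapAdjacent i (insert i S) = insert (i + 1) S := by
  have hS : swapAdjacent i S = S := swapAdjacent_eq_self_iff.2 (iff_of_false hi hi')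
  rw [swapAdjacent, Finset.map_insert, ← swapAdjacent, hS, Equiv.coe_toEmbedding,
    Equiv.swap_apply_left]

theorem swapAdjacent_insert_right (hi : i ∉ S) (hi' : i + 1 ∉ S) :
    swapAdjacent i (insert (i + 1) S) = insert i S := by
  rw [← swapAdjacent_insert_left hi hi', swapAdjacent_swapAdjacent]

theorem swapAdjacent_range (hi : i + 1 < n) :
    swapAdjacent i (Finset.range n) = Finset.range n :=
  swapAdjacent_eq_self_iff.2 (by simp only [Finset.mem_range]; lia)

theorem range_sdiff_swapAdjacent (hi : i + 1 < n) :
    Finset.range n \ swapAdjacent i S = swapAdjacent i (Finset.range n \ S) := by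
  rw [swapAdjacent_sdiff, swapAdjacent_range hi]

theorem swapAdjacent_mem_powersetCard_range {m : ℕ} (hi : i + 1 < n)
    (hS : S ∈ Finset.powersetCard m (Finset.range n)) :
    swapAdjacent i S ∈ Finset.powersetCard m (Finset.range n) := by
  rw [Finset.mem_powersetCard] at hS ⊢
  refine ⟨?_, card_swapAdjacent.trans hS.2⟩
  rw [← swapAdjacent_range hi]
  exact swapAdjacent_mono hS.1

end SwapAdjacent

section MultiFace

variable {X : Type*} {d : List X → ℕ → List X}

theorem multiFace_insert_of_forall_lt {S : Finset ℕ} {M : ℕ} (h : ∀ x ∈ S, x < M) (l : List X) :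
    multiFace d (insert M S) l = multiFace d S (d l M) := by
  have hsort : (insert M S).sort (· ≤ ·) = S.sort (· ≤ ·) ++ [M] := by
    refine (Finset.sortedLT_sort _).eq_of_mem_iff (List.Pairwise.sortedLT ?_) (by simp [or_comm])
    simpa [List.pairwise_append, (Finset.sortedLT_sort S).pairwise] using h
  simp [multiFace, hsort]

theorem PreservesRepeats.degenerate_multiFace (hd : PreservesRepeats d) {S : Finset ℕ}
    {l : List X} {i : ℕ} (hl : RepeatsAt l i) (hi : i ∉ S) (hi' : i + 1 ∉ S) :
    Degenerate (multiFace d S l) := by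
  induction S using Finset.induction_on_max generalizing l i with
  | empty => exact degenerate_iff_exists_repeatsAt.2 ⟨i, by simpa [multiFace] using hl⟩
  | insert M S hM ih =>
    rw [multiFace_insert_of_forall_lt hM]
    rw [Finset.mem_insert, not_or] at hi hi'
    obtain hlt | hgt : M < i ∨ i + 1 < M := by lia
    · obtain ⟨i, rfl⟩ : ∃ i', i = i' + 1 := ⟨i - 1, by lia⟩
      exact ih (hd.repeatsAt_of_le hl (by lia)) (fun h => by have := hM _ h; lia) hi.2
    · exact ih (hd.repeatsAt_of_lt hl hgt) hi.2 hi'.2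

namespace RespectsRepeats

theorem multiFace_insert_succ (hd : RespectsRepeats d) {S : Finset ℕ} {l : List X} {i : ℕ}
    (hl : RepeatsAt l i) (hi : i ∉ S) (hi' : i + 1 ∉ S) :
    multiFace d (insert (i + 1) S) l = multiFace d (insert i S) l := by
  induction S using Finset.induction_on_max generalizing l with
  | empty =>
    rw [multiFace_insert_of_forall_lt (by simp), multiFace_insert_of_forall_lt (by simp),
      hd.apply_succ_eq hl]
  | insert M S hM ih =>
    rw [Finset.mem_insert, not_or] at hi hi'
    obtain hlt | hgt : M < i ∨ i + 1 < M := by lia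
    · have hlt_i : ∀ x ∈ insert M S, x < i :=
        Finset.forall_mem_insert _ _ _ |>.2 ⟨hlt, fun x hx => (hM x hx).trans hlt⟩
      rw [multiFace_insert_of_forall_lt hlt_i,
        multiFace_insert_of_forall_lt fun x hx => (hlt_i x hx).trans (Nat.lt_succ_self i),
        hd.apply_succ_eq hl]
    · rw [Finset.insert_comm, Finset.insert_comm i,
        multiFace_insert_of_forall_lt (Finset.forall_mem_insert _ _ _ |>.2 ⟨hgt, hM⟩),
        multiFace_insert_of_forall_lt (Finset.forall_mem_insert _ _ _ |>.2 ⟨by lia, hM⟩),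
        ih (hd.repeatsAt_of_lt hl hgt) hi.2 hi'.2]

theorem multiFace_swapAdjacent (hd : RespectsRepeats d) {S : Finset ℕ} {l : List X} {i : ℕ}
    (hl : RepeatsAt l i) : multiFace d (swapAdjacent i S) l = multiFace d S l := by
  by_cases hi : i ∈ S <;> by_cases hi' : i + 1 ∈ S
  · rw [swapAdjacent_eq_self_iff.2 (iff_of_true hi hi')]
  · obtain ⟨R, hR, rfl⟩ : ∃ R, i ∉ R ∧ insert i R = S :=
      ⟨S.erase i, Finset.notMem_erase i S, Finset.insert_erase hi⟩
    have hR' : i + 1 ∉ R := fun h => hi' (Finset.mem_insert_of_mem h)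
    rw [swapAdjacent_insert_left hR hR', hd.multiFace_insert_succ hl hR hR']
  · obtain ⟨R, hR', rfl⟩ : ∃ R, i + 1 ∉ R ∧ insert (i + 1) R = S :=
      ⟨S.erase (i + 1), Finset.notMem_erase (i + 1) S, Finset.insert_erase hi'⟩
    have hR : i ∉ R := fun h => hi (Finset.mem_insert_of_mem h)
    rw [swapAdjacent_insert_right hR hR', hd.multiFace_insert_succ hl hR hR']
  · rw [swapAdjacent_eq_self_iff.2 (iff_of_false hi hi')]

end RespectsRepeats

end MultiFace

section ShuffleSign

variable {i n : ℕ} {S T : Finset ℕ}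

theorem lt_iff_eq_or_swap_lt_swap {a b : ℕ} (ha : a ≠ i + 1) (hb : b ≠ i) :
    a < b ↔ (a = i ∧ b = i + 1) ∨ Equiv.swap i (i + 1) a < Equiv.swap i (i + 1) b := by
  simp only [Equiv.swap_apply_def]
  split_ifs <;> lia

theorem card_filter_lt_swapAdjacent (hiS : i ∈ S) (hiS' : i + 1 ∉ S) (hiT : i ∉ T)
    (hiT' : i + 1 ∈ T) :
    {p ∈ S ×ˢ T | p.1 < p.2}.card =
      {p ∈ swapAdjacent i S ×ˢ swapAdjacent i T | p.1 < p.2}.card + 1 := by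
  let σ := Equiv.swap i (i + 1)
  let pairs := {p ∈ swapAdjacent i S ×ˢ swapAdjacent i T | p.1 < p.2}
  have mem_map {a b : ℕ} : (a, b) ∈ pairs.map (σ.prodCongr σ).toEmbedding ↔
      a ∈ S ∧ b ∈ T ∧ σ a < σ b := by
    simp [pairs, σ, Finset.mem_map_equiv, mem_swapAdjacent, and_assoc]
  have hnotMem : (i, i + 1) ∉ pairs.map (σ.prodCongr σ).toEmbedding := by
    rw [mem_map]
    simp [σ]
  have hinsert : {p ∈ S ×ˢ T | p.1 < p.2} =
      insert (i, i + 1) (pairs.map (σ.prodCongr σ).toEmbedding) := by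
    ext ⟨a, b⟩
    rw [Finset.mem_filter, Finset.mem_product, Finset.mem_insert, mem_map, Prod.mk.injEq]
    have hlt (ha : a ∈ S) (hb : b ∈ T) : a < b ↔ (a = i ∧ b = i + 1) ∨ σ a < σ b :=
      lt_iff_eq_or_swap_lt_swap (ne_of_mem_of_not_mem ha hiS') (ne_of_mem_of_not_mem hb hiT)
    constructor
    · rintro ⟨⟨ha, hb⟩, hab⟩
      exact ((hlt ha hb).1 hab).imp_right fun h => ⟨ha, hb, h⟩
    · rintro (⟨rfl, rfl⟩ | ⟨ha, hb, hab⟩)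
      · exact ⟨⟨hiS, hiT'⟩, Nat.lt_succ_self a⟩
      · exact ⟨⟨ha, hb⟩, (hlt ha hb).2 (.inr hab)⟩
  rw [hinsert, Finset.card_insert_of_notMem hnotMem, Finset.card_map]

theorem shuffleSign_swapAdjacent (hiS : i ∈ S) (hiS' : i + 1 ∉ S) (hiT : i ∉ T)
    (hiT' : i + 1 ∈ T) :
    shuffleSign (swapAdjacent i S) (swapAdjacent i T) = -shuffleSign S T := by
  rw [shuffleSign, shuffleSign, card_filter_lt_swapAdjacent hiS hiS' hiT hiT', pow_succ,
    mul_neg_one, neg_neg]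

theorem shuffleSign_swapAdjacent_range_sdiff (hi : i + 1 < n) (hS : ¬(i ∈ S ↔ i + 1 ∈ S)) :
    shuffleSign (swapAdjacent i S) (Finset.range n \ swapAdjacent i S) =
      -shuffleSign S (Finset.range n \ S) := by
  rw [range_sdiff_swapAdjacent hi]
  have hin : i < n := by lia
  obtain ⟨hiS, hiS'⟩ | ⟨hiS, hiS'⟩ : i ∈ S ∧ i + 1 ∉ S ∨ i ∉ S ∧ i + 1 ∈ S := by tauto
  · exact shuffleSign_swapAdjacent hiS hiS' (by simp [hiS]) (by simp [hi, hiS'])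
  · have hneg := shuffleSign_swapAdjacent (S := swapAdjacent i S)
      (T := swapAdjacent i (Finset.range n \ S))
      (left_mem_swapAdjacent.2 hiS') (by rwa [right_mem_swapAdjacent])
      (by simp [left_mem_swapAdjacent, hiS']) (by simp [right_mem_swapAdjacent, hin, hiS])
    rw [swapAdjacent_swapAdjacent, swapAdjacent_swapAdjacent] at hneg
    rw [hneg, neg_neg]

end ShuffleSign

/-- The summand `ε(A) f(δ⁰_A x) g(δ¹_B x)` of the cup product, with `B` the complement of `A`
in `{0, …, n - 1}`. -/
def cupSummand {X A : Type*} [CommRing A] (act : X → X → X) (n : ℕ) (f g : List X → A)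
    (l : List X) (S : Finset ℕ) : A :=
  (shuffleSign S (Finset.range n \ S) : A) *
    (f (multiFace face0 S l) * g (multiFace (face1 act) (Finset.range n \ S) l))

section CupSummand

variable {X A : Type*} [CommRing A] {act : X → X → X} {n i : ℕ} {f g : List X → A} {l : List X}
  {S : Finset ℕ}

theorem cupSummand_eq_zero_of_mem_iff (hf : ∀ l, Degenerate l → f l = 0)
    (hg : ∀ l, Degenerate l → g l = 0) (hl : RepeatsAt l i) (hS : i ∈ S ↔ i + 1 ∈ S) :
    cupSummand act n f g l S = 0 := by
  by_cases hi : i ∈ S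
  · have hdeg : Degenerate (multiFace (face1 act) (Finset.range n \ S) l) :=
      (preservesRepeats_face1 act).degenerate_multiFace hl (by simp [hi]) (by simp [hS.1 hi])
    rw [cupSummand, hg _ hdeg, mul_zero, mul_zero]
  · have hdeg : Degenerate (multiFace face0 S l) :=
      preservesRepeats_face0.degenerate_multiFace hl hi (hS.not.1 hi)
    rw [cupSummand, hf _ hdeg, zero_mul, mul_zero]

theorem cupSummand_swapAdjacent (hidem : ∀ a, act a a = a) (hl : RepeatsAt l i) (hi : i + 1 < n)
    (hS : ¬(i ∈ S ↔ i + 1 ∈ S)) :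
    cupSummand act n f g l (swapAdjacent i S) = -cupSummand act n f g l S := by
  rw [cupSummand, shuffleSign_swapAdjacent_range_sdiff hi hS, range_sdiff_swapAdjacent hi,
    respectsRepeats_face0.multiFace_swapAdjacent hl,
    (respectsRepeats_face1 act hidem).multiFace_swapAdjacent hl, Int.cast_neg, neg_mul, cupSummand]

end CupSummand

theorem stmt_18_general {X A : Type*} [CommRing A] (act : X → X → X)
    (hidem : ∀ a : X, act a a = a) (k m : ℕ) (f g : List X → A)
    (hf : ∀ l : List X, Degenerate l → f l = 0) (hg : ∀ l : List X, Degenerate l → g l = 0)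
    (l : List X) (hlen : l.length = k + m) (hdeg : Degenerate l) : cup act k m f g l = 0 := by
  obtain ⟨i, hl⟩ := degenerate_iff_exists_repeatsAt.1 hdeg
  have hi : i + 1 < k + m := hlen ▸ hl.lt_length
  have hzero {S : Finset ℕ} (hS : i ∈ S ↔ i + 1 ∈ S) : cupSummand act (k + m) f g l S = 0 :=
    cupSummand_eq_zero_of_mem_iff hf hg hl hS
  suffices hsum : ∑ S ∈ Finset.powersetCard m (Finset.range (k + m)),
      cupSummand act (k + m) f g l S = 0 from mul_eq_zero_of_right _ hsum
  refine Finset.sum_involution (fun S _ => swapAdjacent i S) (fun S _ => ?_) (fun S _ hne => ?_)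
    (fun S hS => swapAdjacent_mem_powersetCard_range hi hS) (fun S _ => swapAdjacent_swapAdjacent)
  · by_cases hS : i ∈ S ↔ i + 1 ∈ S
    · rw [swapAdjacent_eq_self_iff.2 hS, hzero hS, add_zero]
    · rw [cupSummand_swapAdjacent hidem hl hi hS, add_neg_cancel]
  · exact mt (fun hfix => hzero (swapAdjacent_eq_self_iff.1 hfix)) hne

/-- For a quandle `X`, cochains vanishing on degenerate tuples are closed under the
cup product. -/
theorem stmt_18 {X A : Type*} [CommRing A] (act : X → X → X)
    (hidem : ∀ a : X, act a a = a)
    (hbij : ∀ b : X, Function.Bijective fun a => act a b)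
    (hdist : ∀ a b c : X, act (act a b) c = act (act a c) (act b c))
    (k m : ℕ) (f g : List X → A)
    (hf : ∀ l : List X, Degenerate l → f l = 0)
    (hg : ∀ l : List X, Degenerate l → g l = 0) :
    ∀ l : List X, l.length = k + m → Degenerate l → cup act k m f g l = 0 :=
  stmt_18_general act hidem k m f g hf hg
end

section
/- Let X be a □-set and define τ(x) = Σ_{σ ∈ S_n} ε(σ)·σ(x) for x ∈ X_n, where σ(x) = (x; {σ(1)};…;{σ(n)}) is the n-simplex of the triangulated Δ-set T(X). Then τ is a chain map from the cubical chain complex of X to the simplicial chain complex of T(X): δ(τ(x)) = τ(δ(x)), where δ on the cubical side is Σᵢ(-1)ⁱ(δ⁰ᵢ - δ¹ᵢ) and on the simplicial side Σᵢ(-1)ⁱδᵢ. -/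
/-- A `□`-set: sets `Xₙ` with cubical face maps `δ^ε_i : X_{n+1} → X_n` (0-based
index `i ≤ n`) satisfying `δ^η_{j-1} δ^ε_i = δ^ε_i δ^η_j` for `i < j`. -/
structure BoxSet where
  obj : ℕ → Type
  face : Bool → (n : ℕ) → ℕ → obj (n + 1) → obj n
  rel : ∀ (ε η : Bool) (n i j : ℕ), i < j → j ≤ n + 1 →
    ∀ x : obj (n + 2),
      face η n (j - 1) (face ε (n + 1) i x) = face ε n i (face η (n + 1) j x)

namespace BoxSet

/-- Basis of the simplicial chain group of the triangulation `T(X)`: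
a cube together with a coloring of its coordinates (the `k`-partition `(S₁;…;S_k)`
of `[n]` encoded as the function sending a coordinate to the (0-based) index of its
block). -/
def SimpBasis (B : BoxSet) : Type := Σ n : ℕ, B.obj n × (Fin n → ℕ)

/-- Iterated cubical faces `δ^ε_S`, indices applied head first (so a descending list
realizes `δ^ε_{s₁} ∘ ⋯ ∘ δ^ε_{s_m}` with `s₁ < ⋯ < s_m`). -/
def faceIter (B : BoxSet) (ε : Bool) : (l : List ℕ) → (n : ℕ) → B.obj (n + l.length) → B.obj n
  | [], _, x => x
  | i :: t, n, x => faceIter B ε t n (B.face ε (n + t.length) i x)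

/-- The end faces `δ₀` (with `ε = 1`, `v = 0`) and `δ_k` (with `ε = 0`, `v = k-1`) of
`T(X)`: remove the block of color `v`, applying the corresponding cubical faces, and
relabel the remaining coordinates and colors order-preservingly. -/
noncomputable def removeFace (B : BoxSet) (ε : Bool) (v : ℕ) : B.SimpBasis → B.SimpBasis
  | ⟨n, x, c⟩ =>
    let T : Finset (Fin n) := Finset.univ.filter fun j => c j = v
    ⟨n - T.card,
      B.faceIter ε (((T.sort (· ≤ ·)).map Fin.val).reverse) (n - T.card)
        (cast (congrArg B.obj (by
          have h1 : (((T.sort (· ≤ ·)).map Fin.val).reverse).length = T.card := by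
            simp
          have h2 : T.card ≤ n := by simpa using Finset.card_le_univ T
          omega)) x),
      fun j =>
        match ((Tᶜ).sort (· ≤ ·))[(j : ℕ)]? with
        | some a => if v = 0 then c a - 1 else c a
        | none => 0⟩

/-- The middle face `δᵢ` (`0 < i < k`) of `T(X)`: merge the blocks of colors `i-1`
and `i`. -/
def mergeFace (B : BoxSet) (i : ℕ) : B.SimpBasis → B.SimpBasis
  | ⟨n, x, c⟩ => ⟨n, x, fun j => if c j < i then c j else c j - 1⟩

/-- The simplicial boundary `Σ_{i=0}^{k} (-1)ⁱ δᵢ` of a `k`-simplex of `T(X)`. -/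
noncomputable def simpBnd (B : BoxSet) (k : ℕ) (s : B.SimpBasis) : B.SimpBasis →₀ ℤ :=
  Finsupp.single (B.removeFace true 0 s) 1
    + ∑ i ∈ Finset.Ioo 0 k, Finsupp.single (B.mergeFace i s) ((-1) ^ i)
    + Finsupp.single (B.removeFace false (k - 1) s) ((-1) ^ k)

/-- `τ(x) = Σ_{σ ∈ S_n} ε(σ) σ(x)`, where `σ(x)` is the simplex of `T(X)` with
singleton blocks `Sᵢ = {σ(i)}` (i.e. coloring `σ.symm`). -/
noncomputable def tau (B : BoxSet) (n : ℕ) (x : B.obj n) : B.SimpBasis →₀ ℤ :=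
  ∑ σ : Equiv.Perm (Fin n),
    Finsupp.single (⟨n, x, fun j => ((σ.symm j : Fin n) : ℕ)⟩ : B.SimpBasis)
      ((Equiv.Perm.sign σ : ℤ))

/-!
Two mechanisms are at work. Each inner face `δᵢ` merges two consecutive singleton blocks, so it does
not distinguish `σ` from `σ ∘ (i, i+1)`, and the signed sum of these faces over `S_{n+1}` cancels in
pairs. For the end faces, expand `S_{n+1}` along the position `q` of the removed block, as in the
Laplace expansion of a determinant: a permutation `σ` with `σ q = p` amounts to a permutation `e` of
the remaining `n` letters, `ε(σ) = (-1)^{q+p} ε(e)`, and the end face of `σ(x)` is `e(δ_p x)`.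
-/

section Permutations

variable {n : ℕ}

/-- The permutation of `Fin (n + 1)` sending `q` to `p` and acting as `e` between the complements of
`q` and `p`, each identified with `Fin n` by its order-preserving labelling. The cycles `cycleRange`
move `q` and `p` to `0`, keeping the order of the other letters, which determines the sign. -/
def insertPerm (q p : Fin (n + 1)) (e : Equiv.Perm (Fin n)) : Equiv.Perm (Fin (n + 1)) :=
  p.cycleRange.symm * Equiv.Perm.decomposeFin.symm (0, e) * q.cycleRange

theorem insertPerm_apply_self (q p : Fin (n + 1)) (e : Equiv.Perm (Fin n)) :
    insertPerm q p e q = p := by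
  simp [insertPerm]

theorem insertPerm_apply_succAbove (q p : Fin (n + 1)) (e : Equiv.Perm (Fin n)) (j : Fin n) :
    insertPerm q p e (q.succAbove j) = p.succAbove (e j) := by
  simp [insertPerm]

theorem insertPerm_symm_apply_eq_iff (q p : Fin (n + 1)) (e : Equiv.Perm (Fin n))
    (j : Fin (n + 1)) : (insertPerm q p e).symm j = q ↔ j = p := by
  rw [Equiv.symm_apply_eq, insertPerm_apply_self]

theorem insertPerm_symm_apply_succAbove (q p : Fin (n + 1)) (e : Equiv.Perm (Fin n))
    (j : Fin n) : (insertPerm q p e).symm (p.succAbove j) = q.succAbove (e.symm j) := by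
  rw [Equiv.symm_apply_eq, insertPerm_apply_succAbove, Equiv.apply_symm_apply]

theorem sign_insertPerm (q p : Fin (n + 1)) (e : Equiv.Perm (Fin n)) :
    (Equiv.Perm.sign (insertPerm q p e) : ℤ) =
      (-1) ^ ((q : ℕ) + (p : ℕ)) * (Equiv.Perm.sign e : ℤ) := by
  simp only [insertPerm, Equiv.Perm.sign_mul, Equiv.Perm.sign_symm, Fin.sign_cycleRange,
    Equiv.Perm.decomposeFin.symm_sign, if_pos, Units.val_mul, Units.val_pow_eq_pow_val,
    Units.val_neg, Units.val_one]
  ring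

theorem insertPerm_bijective (q : Fin (n + 1)) :
    Function.Bijective fun pe : Fin (n + 1) × Equiv.Perm (Fin n) => insertPerm q pe.1 pe.2 := by
  rw [Fintype.bijective_iff_injective_and_card]
  refine ⟨?_, by simp [Fintype.card_perm, Nat.factorial_succ]⟩
  rintro ⟨p, e⟩ ⟨p', e'⟩ h
  obtain rfl : p = p' := by
    simpa only [insertPerm_apply_self] using Equiv.congr_fun h q
  have e_eq : e = e' := Equiv.ext fun j => p.succAbove_right_injective <| by
    simpa only [insertPerm_apply_succAbove] using Equiv.congr_fun h (q.succAbove j)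
  rw [e_eq]

theorem sum_perm_eq_sum_insertPerm {M : Type*} [AddCommMonoid M] (q : Fin (n + 1))
    (f : Equiv.Perm (Fin (n + 1)) → M) :
    ∑ σ, f σ = ∑ p, ∑ e, f (insertPerm q p e) := by
  rw [← (insertPerm_bijective q).sum_comp, Fintype.sum_prod_type]

theorem sum_sign_smul_eq_zero_of_mul_swap {α M : Type*} [Fintype α] [DecidableEq α]
    [AddCommGroup M] {a b : α} (hab : a ≠ b) {f : Equiv.Perm α → M}
    (hf : ∀ σ, f (σ * Equiv.swap a b) = f σ) :
    ∑ σ, (Equiv.Perm.sign σ : ℤ) • f σ = 0 := by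
  refine Finset.sum_involution (fun σ _ => σ * Equiv.swap a b) ?_ ?_ ?_ ?_
  · intro σ _
    simp [hf, Equiv.Perm.sign_swap hab]
  · intro σ _ _ hfix
    exact hab (Equiv.swap_eq_one_iff.mp (mul_eq_left.mp hfix))
  · exact fun _ _ => Finset.mem_univ _
  · intro σ _
    simp [mul_assoc]

end Permutations

theorem sort_compl_singleton_getElem? {n : ℕ} (p : Fin (n + 1)) (j : Fin n) :
    (({p}ᶜ : Finset (Fin (n + 1))).sort (· ≤ ·))[(j : ℕ)]? = some (p.succAbove j) := by
  have card_compl : ({p}ᶜ : Finset (Fin (n + 1))).card = n := by simp [Finset.card_compl]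
  have succAbove_eq : p.succAbove = ({p}ᶜ : Finset (Fin (n + 1))).orderEmbOfFin card_compl :=
    Finset.orderEmbOfFin_unique card_compl (fun j => by simp) (Fin.strictMono_succAbove p)
  rw [succAbove_eq, Finset.orderEmbOfFin_apply]
  simp [card_compl]

section Triangulation

variable (B : BoxSet) {n : ℕ}

/-- The simplex `σ(x) = (x; {σ 0}; …; {σ (n-1)})` of `T(X)`. The coordinate `j` lies in the block
with index `σ⁻¹ j`, hence the coloring by `σ.symm`. -/
def permSimplex (x : B.obj n) (σ : Equiv.Perm (Fin n)) : B.SimpBasis :=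
  ⟨n, x, fun j => (σ.symm j : ℕ)⟩

theorem tau_eq_sum_single_permSimplex (x : B.obj n) :
    B.tau n x = ∑ σ, Finsupp.single (B.permSimplex x σ) (Equiv.Perm.sign σ : ℤ) :=
  rfl

theorem sum_tau_smul {M : Type*} [AddCommGroup M] (x : B.obj n) (f : B.SimpBasis → M) :
    ((B.tau n x).sum fun s z => z • f s) =
      ∑ σ, (Equiv.Perm.sign σ : ℤ) • f (B.permSimplex x σ) := by
  change Finsupp.linearCombination ℤ f (B.tau n x) = _
  simp only [tau_eq_sum_single_permSimplex, map_sum, Finsupp.linearCombination_single]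

theorem simpBnd_eq_smul_single (k : ℕ) (s : B.SimpBasis) :
    B.simpBnd k s =
      Finsupp.single (B.removeFace true 0 s) 1
        + ∑ i ∈ Finset.Ioo 0 k, (-1 : ℤ) ^ i • Finsupp.single (B.mergeFace i s) 1
        + (-1 : ℤ) ^ k • Finsupp.single (B.removeFace false (k - 1) s) 1 := by
  simp only [simpBnd, Finsupp.smul_single_one]

theorem mergeFace_permSimplex_mul_swap (x : B.obj (n + 1)) (i : Fin n)
    (σ : Equiv.Perm (Fin (n + 1))) :
    B.mergeFace (i + 1) (B.permSimplex x (σ * Equiv.swap i.castSucc i.succ)) =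
      B.mergeFace (i + 1) (B.permSimplex x σ) := by
  have merged_eq (k : Fin (n + 1)) :
      (if (Equiv.swap i.castSucc i.succ k : ℕ) < i + 1 then (Equiv.swap i.castSucc i.succ k : ℕ)
        else (Equiv.swap i.castSucc i.succ k : ℕ) - 1) =
      if (k : ℕ) < i + 1 then (k : ℕ) else (k : ℕ) - 1 := by
    rw [Equiv.swap_apply_def]
    split_ifs <;> simp_all
  exact congrArg (fun c => (⟨n + 1, x, c⟩ : B.SimpBasis)) (funext fun j => merged_eq (σ.symm j))

theorem sum_sign_smul_mergeFace_eq_zero {M : Type*} [AddCommGroup M] (x : B.obj (n + 1)) (i : Fin n)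
    (f : B.SimpBasis → M) :
    ∑ σ, (Equiv.Perm.sign σ : ℤ) • f (B.mergeFace (i + 1) (B.permSimplex x σ)) = 0 :=
  sum_sign_smul_eq_zero_of_mul_swap i.castSucc_lt_succ.ne fun σ => by
    rw [mergeFace_permSimplex_mul_swap]

theorem faceIter_cast_of_eq_singleton (ε : Bool) (x : B.obj (n + 1)) {l : List ℕ} {i : ℕ}
    (hl : l = [i]) (h : B.obj (n + 1) = B.obj (n + l.length)) :
    B.faceIter ε l n (cast h x) = B.face ε n i x := by
  subst hl
  rfl

theorem removeFace_of_singleton_block (ε : Bool) {v : ℕ} (x : B.obj (n + 1))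
    {c : Fin (n + 1) → ℕ} {p : Fin (n + 1)} (hp : ∀ j, c j = v ↔ j = p) :
    B.removeFace ε v ⟨n + 1, x, c⟩ =
      ⟨n, B.face ε n p x, fun j =>
        if v = 0 then c (p.succAbove j) - 1 else c (p.succAbove j)⟩ := by
  dsimp -zeta only [removeFace]
  extract_lets T
  have block_eq : T = {p} := by
    ext j
    simp [T, hp]
  -- The transport proof mentions the value of `T`; abstracting it lets `T` be replaced by `{p}`.
  generalize_proofs
  clear_value T
  subst block_eq
  change (⟨n, _, _⟩ : B.SimpBasis) = _
  congr 2
  · exact B.faceIter_cast_of_eq_singleton ε x (by simp) _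
  · funext j
    simp only [sort_compl_singleton_getElem? p j]

-- `removeFace` shifts the remaining colors only when `v = 0`, so it closes the gap left by `v` only
-- if `v` is the first or the last color.
theorem removeFace_permSimplex_insertPerm (ε : Bool) (x : B.obj (n + 1)) {q : Fin (n + 1)}
    (hq : q = 0 ∨ q = Fin.last n) (p : Fin (n + 1)) (e : Equiv.Perm (Fin n)) :
    B.removeFace ε q (B.permSimplex x (insertPerm q p e)) =
      B.permSimplex (B.face ε n p x) e := by
  have relabel (k : Fin n) :
      (if (q : ℕ) = 0 then (q.succAbove k : ℕ) - 1 else q.succAbove k) = k := by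
    rcases hq with rfl | rfl
    · simp
    · have n_ne_zero : n ≠ 0 := k.pos.ne'
      simp [n_ne_zero]
  rw [permSimplex, B.removeFace_of_singleton_block ε x (p := p) fun j => by
    rw [← Fin.ext_iff, insertPerm_symm_apply_eq_iff]]
  simp only [insertPerm_symm_apply_succAbove, relabel]
  rfl

theorem sum_sign_smul_removeFace (ε : Bool) (x : B.obj (n + 1)) {q : Fin (n + 1)}
    (hq : q = 0 ∨ q = Fin.last n) :
    ∑ σ, (Equiv.Perm.sign σ : ℤ) •
        Finsupp.single (B.removeFace ε q (B.permSimplex x σ)) (1 : ℤ) =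
      ∑ p : Fin (n + 1), (-1 : ℤ) ^ ((q : ℕ) + (p : ℕ)) • B.tau n (B.face ε n p x) := by
  rw [sum_perm_eq_sum_insertPerm q]
  refine Finset.sum_congr rfl fun p _ => ?_
  simp only [B.removeFace_permSimplex_insertPerm ε x hq, sign_insertPerm, mul_smul,
    ← Finset.smul_sum, Finsupp.smul_single_one, tau_eq_sum_single_permSimplex]

theorem sum_tau_smul_simpBnd (x : B.obj (n + 1)) :
    ((B.tau (n + 1) x).sum fun s z => z • B.simpBnd (n + 1) s) =
      (∑ σ, (Equiv.Perm.sign σ : ℤ) •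
        Finsupp.single (B.removeFace true 0 (B.permSimplex x σ)) 1)
      + (-1 : ℤ) ^ (n + 1) • ∑ σ, (Equiv.Perm.sign σ : ℤ) •
        Finsupp.single (B.removeFace false n (B.permSimplex x σ)) 1 := by
  have inner_faces_cancel : ∑ i ∈ Finset.Ioo 0 (n + 1), (-1 : ℤ) ^ i •
      ∑ σ, (Equiv.Perm.sign σ : ℤ) •
        Finsupp.single (B.mergeFace i (B.permSimplex x σ)) (1 : ℤ) = 0 := by
    refine Finset.sum_eq_zero fun i hi => ?_
    obtain ⟨i_pos, i_lt⟩ := Finset.mem_Ioo.mp hi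
    obtain ⟨k, rfl⟩ := Nat.exists_eq_add_one.mpr i_pos
    rw [B.sum_sign_smul_mergeFace_eq_zero x ⟨k, Nat.lt_of_succ_lt_succ i_lt⟩
      (Finsupp.single · (1 : ℤ)), smul_zero]
  simp only [Finset.smul_sum] at inner_faces_cancel
  rw [Finset.sum_comm] at inner_faces_cancel
  rw [sum_tau_smul]
  simp only [simpBnd_eq_smul_single, smul_add, Finset.sum_add_distrib,
    Finset.smul_sum, Nat.add_sub_cancel, smul_comm (Units.val _) ((-1 : ℤ) ^ _)]
  rw [inner_faces_cancel, add_zero]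

end Triangulation

/-- `τ` is a chain map: the simplicial boundary of `τ(x)` equals `τ` of the cubical
boundary `Σᵢ (-1)ⁱ (δ⁰ᵢ - δ¹ᵢ) x`. -/
theorem stmt_19 (B : BoxSet) (n : ℕ) (x : B.obj (n + 1)) :
    ((B.tau (n + 1) x).sum fun s z => z • B.simpBnd (n + 1) s) =
      ∑ i ∈ Finset.range (n + 1),
        ((-1 : ℤ) ^ (i + 1)) •
          (B.tau n (B.face false n i x) - B.tau n (B.face true n i x)) := by
  have first_faces := B.sum_sign_smul_removeFace true x (Or.inl rfl)
  have last_faces := B.sum_sign_smul_removeFace false x (Or.inr rfl)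
  simp only [Fin.val_zero, Fin.val_last, zero_add] at first_faces last_faces
  have last_sign (i : ℕ) : (-1 : ℤ) ^ (n + 1) * (-1) ^ (n + i) = (-1) ^ (i + 1) := by
    rw [← pow_add, show n + 1 + (n + i) = 2 * n + (i + 1) by ring, pow_add, pow_mul]
    simp
  rw [sum_tau_smul_simpBnd, first_faces, last_faces, Finset.smul_sum, Finset.sum_range,
    ← Finset.sum_add_distrib]
  refine Finset.sum_congr rfl fun i _ => ?_
  rw [smul_smul, last_sign, pow_succ]
  module

end BoxSet
end
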